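/- arXiv:2507.04373 — 5 statements merged into one kernel-verified Lean document; each statement's English description precedes it below -/
import Mathlib

section
/- Let n ≥ 1 be a natural number, let P be a nonempty subset of {1,…,n}, let ρ ∈ (0,1/2) be a real number, and let μ be a probability mass function on {0,1}^n with μ(x) > 0 for every x ∈ {0,1}^n. For β = (β₀,β₁,…,β_n) ∈ ℝ^{n+1} define the threshold classifier ĥ_β(x) = 1{β₀ + Σ_{j=1}^n β_j x_j > 0} and, for λ > 0, the loss L_λ(β) = Σ_{x∈{0,1}^n} μ(x)·(ρ + (1−2ρ)·1{ĥ_β(x) ≠ θ(x)}) + λ·|{j ∈ {1,…,n} : β_j ≠ 0}|, where θ(x) = max_{j∈P} x_j is the OR of the coordinates in P. Then there exists λ > 0 such that every global minimizer β* of L_λ satisfies β*_j = 0 for every j ∉ P and β*_j > 0 for every j ∈ P. -/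
open Finset

/-- Threshold classifier `1{β₀ + Σ_j β_j x_j > 0}` as a real value. -/
noncomputable def classifierOut (n : ℕ) (β₀ : ℝ) (β : Fin n → ℝ) (x : Fin n → Bool) : ℝ :=
  if 0 < β₀ + ∑ j, β j * (if x j then 1 else 0) then 1 else 0

/-- OR target: `θ(x) = max_{j ∈ P} x_j`. -/
noncomputable def orTarget (n : ℕ) (P : Finset (Fin n)) (x : Fin n → Bool) : ℝ :=
  if ∃ j ∈ P, x j = true then 1 else 0

/-- The loss `Σ_x μ(x)·(ρ + (1−2ρ)·1{ĥ_β(x) ≠ θ(x)}) + λ·#{j : β_j ≠ 0}`. -/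
noncomputable def lossFn (n : ℕ) (ρ lam : ℝ) (μ : (Fin n → Bool) → ℝ)
    (θ : (Fin n → Bool) → ℝ) (β₀ : ℝ) (β : Fin n → ℝ) : ℝ :=
  (∑ x : Fin n → Bool, μ x *
      (ρ + (1 - 2 * ρ) * (if classifierOut n β₀ β x = θ x then 0 else 1)))
    + lam * ((Finset.univ.filter fun j => β j ≠ 0).card : ℝ)

/-- Any global minimizer of the ℓ₀-penalized loss for an OR target has zero
coefficients outside `P` and strictly positive coefficients on `P`. -/
theorem or_subgoal_recovery (n : ℕ) (hn : 1 ≤ n) (P : Finset (Fin n)) (hP : P.Nonempty)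
    (ρ : ℝ) (hρ0 : 0 < ρ) (hρ : ρ < 1 / 2)
    (μ : (Fin n → Bool) → ℝ) (hμpos : ∀ x, 0 < μ x) (hμsum : ∑ x, μ x = 1) :
    ∃ lam : ℝ, 0 < lam ∧
      ∀ (β₀ : ℝ) (β : Fin n → ℝ),
        (∀ (γ₀ : ℝ) (γ : Fin n → ℝ),
            lossFn n ρ lam μ (orTarget n P) β₀ β ≤ lossFn n ρ lam μ (orTarget n P) γ₀ γ) →
        (∀ j, j ∉ P → β j = 0) ∧ (∀ j ∈ P, 0 < β j) := by
  obtain ⟨x0, -, hx0⟩ := Finset.exists_min_image (Finset.univ : Finset (Fin n → Bool)) μ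
    ⟨fun _ => false, Finset.mem_univ _⟩
  have hm := hμpos x0
  have hc : 0 < 1 - 2 * ρ := by linarith
  have hn1 : (0 : ℝ) < (n : ℝ) + 1 := by positivity
  refine ⟨(1 - 2 * ρ) * μ x0 / (n + 1), by positivity, ?_⟩
  set lam : ℝ := (1 - 2 * ρ) * μ x0 / (n + 1) with hlam
  have hlampos : 0 < lam := by positivity
  have hlam_mul : lam * (n + 1) = (1 - 2 * ρ) * μ x0 := by
    rw [hlam]; field_simp
  intro β₀ β hmin
  -- the reference classifier
  have href : ∀ x, classifierOut n (-(1 / 2)) (fun j => if j ∈ P then 1 else 0) x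
      = orTarget n P x := by
    intro x
    unfold classifierOut orTarget
    by_cases h : ∃ j ∈ P, x j = true
    · rw [if_pos h, if_pos]
      obtain ⟨j, hj, hxj⟩ := h
      have h1 := Finset.single_le_sum (s := Finset.univ)
        (f := fun j => (if j ∈ P then (1 : ℝ) else 0) * (if x j then 1 else 0))
        (fun i _ => by positivity) (Finset.mem_univ j)
      simp only [hj, hxj, if_true] at h1
      linarith
    · rw [if_neg h, if_neg]
      have h0 : ∑ j, (if j ∈ P then (1 : ℝ) else 0) * (if x j then 1 else 0) = 0 := by
        apply Finset.sum_eq_zero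
        intro j _
        by_cases hj : j ∈ P
        · have : ¬ x j = true := fun hx => h ⟨j, hj, hx⟩
          simp [this]
        · simp [hj]
      rw [h0]; norm_num
  have hrefloss : lossFn n ρ lam μ (orTarget n P) (-(1 / 2)) (fun j => if j ∈ P then 1 else 0)
      = ρ + lam * (P.card : ℝ) := by
    unfold lossFn
    simp only [href, if_true, mul_zero, add_zero]
    rw [← Finset.sum_mul, hμsum, one_mul]
    congr 4
    ext j
    simp
  have hle := hmin (-(1 / 2)) (fun j => if j ∈ P then 1 else 0)
  rw [hrefloss] at hle
  have hloss : lossFn n ρ lam μ (orTarget n P) β₀ β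
      = ρ + (1 - 2 * ρ) * (∑ x, μ x * (if classifierOut n β₀ β x = orTarget n P x then 0 else 1))
        + lam * ((Finset.univ.filter fun j => β j ≠ 0).card : ℝ) := by
    unfold lossFn
    congr 1
    simp only [mul_add]
    rw [Finset.sum_add_distrib, ← Finset.sum_mul, hμsum, one_mul, Finset.mul_sum]
    congr 1
    apply Finset.sum_congr rfl
    intro x _
    ring
  rw [hloss] at hle
  have hnn : ∀ x ∈ (Finset.univ : Finset (Fin n → Bool)),
      0 ≤ μ x * (if classifierOut n β₀ β x = orTarget n P x then (0 : ℝ) else 1) := by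
    intro x _
    have := hμpos x
    split_ifs <;> linarith
  have hPn : (P.card : ℝ) ≤ n := by
    have := Finset.card_le_univ P
    rw [Fintype.card_fin] at this
    exact_mod_cast this
  -- the minimizer makes no mistake
  have hcorrect : ∀ x, classifierOut n β₀ β x = orTarget n P x := by
    intro x
    by_contra hx
    have h1 := Finset.single_le_sum hnn (Finset.mem_univ x)
    rw [if_neg hx, mul_one] at h1
    have h2 := hx0 x (Finset.mem_univ x)
    have h3 := mul_le_mul_of_nonneg_left (h2.trans h1) hc.le
    have h4 : 0 ≤ lam * ((Finset.univ.filter fun j => β j ≠ 0).card : ℝ) := by positivity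
    have h5 := mul_le_mul_of_nonneg_left hPn hlampos.le
    linarith
  have hb0 : β₀ ≤ 0 := by
    have h := hcorrect (fun _ => false)
    by_contra hb
    simp [classifierOut, orTarget] at h
    linarith
  have hpos : ∀ j ∈ P, 0 < β j := by
    intro j hj
    have h := hcorrect (fun i => decide (i = j))
    have ht : orTarget n P (fun i => decide (i = j)) = 1 := by
      unfold orTarget
      rw [if_pos ⟨j, hj, by simp⟩]
    rw [ht] at h
    simp [classifierOut] at h
    linarith
  refine ⟨?_, hpos⟩
  have hsub : P ⊆ Finset.univ.filter fun j => β j ≠ 0 := by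
    intro j hj
    simpa using (hpos j hj).ne'
  have hcard : (Finset.univ.filter fun j => β j ≠ 0).card ≤ P.card := by
    have h1 := mul_nonneg hc.le (Finset.sum_nonneg hnn)
    have h2 : lam * ((Finset.univ.filter fun j => β j ≠ 0).card : ℝ) ≤ lam * (P.card : ℝ) := by
      linarith
    exact_mod_cast le_of_mul_le_mul_left h2 hlampos
  have heq := Finset.eq_of_subset_of_card_le hsub hcard
  intro j hj
  by_contra hb
  apply hj
  rw [heq]
  simpa using hb
end

section
/- Let n ≥ 1 be a natural number, let P be a nonempty subset of {1,…,n}, let ρ ∈ (0,1/2) be a real number, and let μ be a probability mass function on {0,1}^n with μ(x) > 0 for every x ∈ {0,1}^n. For β = (β₀,β₁,…,β_n) ∈ ℝ^{n+1} define the threshold classifier ĥ_β(x) = 1{β₀ + Σ_{j=1}^n β_j x_j > 0} and, for λ > 0, the loss L_λ(β) = Σ_{x∈{0,1}^n} μ(x)·(ρ + (1−2ρ)·1{ĥ_β(x) ≠ θ(x)}) + λ·|{j ∈ {1,…,n} : β_j ≠ 0}|, where θ(x) = min_{j∈P} x_j is the AND of the coordinates in P. Then there exists λ > 0 such that every global minimizer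 β* of L_λ satisfies: β*_j = 0 for every j ∉ P; Σ_{j∈U} β*_j ≤ −β*₀ for every proper subset U ⊊ P; Σ_{j∈P} β*_j > −β*₀; and consequently β*_j > 0 for every j ∈ P. -/
open Finset

/-- AND target: `θ(x) = min_{j ∈ P} x_j`. -/
noncomputable def andTarget (n : ℕ) (P : Finset (Fin n)) (x : Fin n → Bool) : ℝ :=
  if ∀ j ∈ P, x j = true then 1 else 0

/-- If the classifier agrees with the target everywhere, the loss is explicit. -/
lemma loss_of_perfect (n : ℕ) (ρ lam : ℝ) (μ : (Fin n → Bool) → ℝ) (hμsum : ∑ x, μ x = 1)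
    (θ : (Fin n → Bool) → ℝ) (β₀ : ℝ) (β : Fin n → ℝ)
    (h : ∀ x, classifierOut n β₀ β x = θ x) :
    lossFn n ρ lam μ θ β₀ β
      = ρ + lam * ((Finset.univ.filter fun j => β j ≠ 0).card : ℝ) := by
  unfold lossFn
  simp only [h, if_true, mul_zero, add_zero]
  rw [← Finset.sum_mul, hμsum, one_mul]

/-- A single misclassified point costs at least `(1 - 2ρ) μ x`. -/
lemma loss_of_imperfect (n : ℕ) (ρ lam : ℝ) (hρ : ρ < 1 / 2) (hlam : 0 < lam)
    (μ : (Fin n → Bool) → ℝ) (hμpos : ∀ x, 0 < μ x)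
    (hμsum : ∑ x, μ x = 1)
    (θ : (Fin n → Bool) → ℝ) (β₀ : ℝ) (β : Fin n → ℝ) (x : Fin n → Bool)
    (h : classifierOut n β₀ β x ≠ θ x) :
    ρ + (1 - 2 * ρ) * μ x ≤ lossFn n ρ lam μ θ β₀ β := by
  unfold lossFn
  have h1 : ∑ y : Fin n → Bool, μ y *
      (ρ + (1 - 2 * ρ) * (if classifierOut n β₀ β y = θ y then 0 else 1))
      = ρ + ∑ y : Fin n → Bool,
        μ y * ((1 - 2 * ρ) * (if classifierOut n β₀ β y = θ y then 0 else 1)) := by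
    simp only [mul_add]
    rw [Finset.sum_add_distrib, ← Finset.sum_mul, hμsum, one_mul]
  have h2 : μ x * ((1 - 2 * ρ) * (if classifierOut n β₀ β x = θ x then 0 else 1)) ≤
      ∑ y : Fin n → Bool,
        μ y * ((1 - 2 * ρ) * (if classifierOut n β₀ β y = θ y then 0 else 1)) := by
    apply Finset.single_le_sum
      (f := fun y => μ y * ((1 - 2 * ρ) * (if classifierOut n β₀ β y = θ y then 0 else 1)))
    · intro y _
      have := hμpos y
      have h3 : 0 ≤ 1 - 2 * ρ := by linarith
      split_ifs <;> positivity
    · exact Finset.mem_univ x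
  rw [if_neg h] at h2
  have h4 : 0 ≤ lam * ((Finset.univ.filter fun j => β j ≠ 0).card : ℝ) := by positivity
  rw [h1]
  linarith

lemma score_indicator (n : ℕ) (β : Fin n → ℝ) (U : Finset (Fin n)) :
    ∑ j, β j * (if (decide (j ∈ U)) = true then (1 : ℝ) else 0) = ∑ j ∈ U, β j := by
  simp

/-- The reference AND classifier is perfect. -/
lemma reference_perfect (n : ℕ) (P : Finset (Fin n)) (x : Fin n → Bool) :
    classifierOut n (1 / 2 - (P.card : ℝ)) (fun j => if j ∈ P then 1 else 0) x
      = andTarget n P x := by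
  unfold classifierOut andTarget
  have h1 : ∑ j, (if j ∈ P then (1 : ℝ) else 0) * (if x j = true then 1 else 0)
      = ((P.filter fun j => x j = true).card : ℝ) := by
    rw [Finset.card_filter]
    push_cast
    simp only [ite_mul, one_mul, zero_mul, Finset.sum_ite_mem, Finset.univ_inter]
  rw [h1]
  refine if_congr ?_ rfl rfl
  constructor
  · intro h
    have h2 : P.card ≤ (P.filter fun j => x j = true).card := by
      have : (P.card : ℝ) < ((P.filter fun j => x j = true).card : ℝ) + 1 := by linarith
      have : P.card < (P.filter fun j => x j = true).card + 1 := by exact_mod_cast this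
      omega
    have h3 := Finset.eq_of_subset_of_card_le (Finset.filter_subset _ _) h2
    exact Finset.filter_eq_self.mp h3
  · intro h
    rw [Finset.filter_true_of_mem h]
    linarith

/-- Any global minimizer of the ℓ₀-penalized loss for an AND target has zero
coefficients outside `P`, satisfies `Σ_{j∈U} β_j ≤ −β₀` for every proper subset
`U ⊊ P` and `Σ_{j∈P} β_j > −β₀`, and has strictly positive coefficients on `P`. -/
theorem and_subgoal_recovery (n : ℕ) (hn : 1 ≤ n) (P : Finset (Fin n)) (hP : P.Nonempty)
    (ρ : ℝ) (hρ0 : 0 < ρ) (hρ : ρ < 1 / 2)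
    (μ : (Fin n → Bool) → ℝ) (hμpos : ∀ x, 0 < μ x) (hμsum : ∑ x, μ x = 1) :
    ∃ lam : ℝ, 0 < lam ∧
      ∀ (β₀ : ℝ) (β : Fin n → ℝ),
        (∀ (γ₀ : ℝ) (γ : Fin n → ℝ),
            lossFn n ρ lam μ (andTarget n P) β₀ β ≤ lossFn n ρ lam μ (andTarget n P) γ₀ γ) →
        (∀ j, j ∉ P → β j = 0) ∧
        (∀ U : Finset (Fin n), U ⊂ P → ∑ j ∈ U, β j ≤ -β₀) ∧
        (-β₀ < ∑ j ∈ P, β j) ∧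
        (∀ j ∈ P, 0 < β j) := by
  obtain ⟨x₀, hx₀⟩ := Finite.exists_min μ
  have hn' : (0 : ℝ) < n := by exact_mod_cast hn
  have hc : 0 < (1 - 2 * ρ) * μ x₀ := mul_pos (by linarith) (hμpos x₀)
  refine ⟨(1 - 2 * ρ) * μ x₀ / (2 * n), by positivity, ?_⟩
  set lam := (1 - 2 * ρ) * μ x₀ / (2 * n) with hlam
  have hlam0 : 0 < lam := by positivity
  have hlamn : lam * n < (1 - 2 * ρ) * μ x₀ := by
    have : lam * n = (1 - 2 * ρ) * μ x₀ / 2 := by rw [hlam]; field_simp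
    linarith
  intro β₀ β hmin
  have href := hmin (1 / 2 - (P.card : ℝ)) (fun j => if j ∈ P then 1 else 0)
  rw [loss_of_perfect n ρ lam μ hμsum _ _ (fun j => if j ∈ P then 1 else 0)
    (reference_perfect n P)] at href
  have hsupp : (Finset.univ.filter fun j : Fin n => (if j ∈ P then (1 : ℝ) else 0) ≠ 0) = P := by
    ext j; simp
  rw [hsupp] at href
  have hperf : ∀ x, classifierOut n β₀ β x = andTarget n P x := by
    intro x
    by_contra hx
    have h1 := loss_of_imperfect n ρ lam hρ hlam0 μ hμpos hμsum _ β₀ β x hx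
    have h2 : (1 - 2 * ρ) * μ x₀ ≤ (1 - 2 * ρ) * μ x :=
      mul_le_mul_of_nonneg_left (hx₀ x) (by linarith)
    have h3 : (P.card : ℝ) ≤ n := by
      have := Finset.card_le_univ P
      rw [Fintype.card_fin] at this
      exact_mod_cast this
    have h4 := mul_le_mul_of_nonneg_left h3 hlam0.le
    linarith
  rw [loss_of_perfect n ρ lam μ hμsum _ _ _ hperf] at href
  have hcard : (Finset.univ.filter fun j => β j ≠ 0).card ≤ P.card := by
    have h1 := le_of_mul_le_mul_left (le_of_add_le_add_left href) hlam0
    exact_mod_cast h1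
  have hU : ∀ U : Finset (Fin n), U ⊂ P → ∑ j ∈ U, β j ≤ -β₀ := by
    intro U hUP
    have h1 := hperf (fun j => decide (j ∈ U))
    unfold classifierOut andTarget at h1
    rw [score_indicator] at h1
    have h2 : ¬ ∀ j ∈ P, decide (j ∈ U) = true := by
      intro h
      exact hUP.2 (fun j hj => by simpa using h j hj)
    rw [if_neg h2] at h1
    by_contra h3
    rw [if_pos (by linarith)] at h1
    exact one_ne_zero h1
  have hPs : -β₀ < ∑ j ∈ P, β j := by
    have h1 := hperf (fun j => decide (j ∈ P))
    unfold classifierOut andTarget at h1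
    rw [score_indicator] at h1
    have h2 : ∀ j ∈ P, decide (j ∈ P) = true := fun j hj => by simpa using hj
    rw [if_pos h2] at h1
    by_contra h3
    rw [if_neg (by linarith)] at h1
    exact zero_ne_one h1
  have hpos : ∀ j ∈ P, 0 < β j := by
    intro j hj
    have h1 := hU _ (Finset.erase_ssubset hj)
    have h2 := Finset.add_sum_erase P β hj
    linarith
  refine ⟨?_, hU, hPs, hpos⟩
  have hsub : P ⊆ Finset.univ.filter fun j => β j ≠ 0 := by
    intro j hj
    simpa using (hpos j hj).ne'
  have heq := Finset.eq_of_subset_of_card_le hsub hcard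
  intro j hj
  by_contra h
  apply hj
  rw [heq]
  simpa using h
end

section
/- Let n ≥ 1 be a natural number, let P be a nonempty subset of {1,…,n}, let β : P → ℝ, and let β₀ ∈ ℝ. Then the following are equivalent: (i) for every i ∈ P, Σ_{j∈P, j≠i} β_j ≤ −β₀, and Σ_{j∈P} β_j > −β₀; (ii) for every x ∈ {0,1}^n, the indicator 1{β₀ + Σ_{j∈P} β_j x_j > 0} equals min_{j∈P} x_j (the AND of the coordinates of x indexed by P). Moreover, these conditions imply β_j > 0 for every j ∈ P, and hence that Σ_{j∈U} β_j ≤ −β₀ for every proper subset U ⊊ P. -/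
open Finset

/-- The threshold classifier `1{β₀ + Σ_{j∈P} β_j x_j > 0}` computes the AND of
the coordinates indexed by `P` on all binary inputs iff
`Σ_{j∈P, j≠i} β_j ≤ −β₀` for every `i ∈ P` and `Σ_{j∈P} β_j > −β₀`; moreover
these conditions imply `β_j > 0` for all `j ∈ P` and `Σ_{j∈U} β_j ≤ −β₀` for
every proper subset `U ⊊ P`. -/
theorem and_threshold_iff (n : ℕ) (hn : 1 ≤ n) (P : Finset (Fin n)) (hP : P.Nonempty)
    (β : Fin n → ℝ) (β₀ : ℝ) :
    (((∀ i ∈ P, ∑ j ∈ P.erase i, β j ≤ -β₀) ∧ -β₀ < ∑ j ∈ P, β j) ↔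
      ∀ x : Fin n → Bool,
        (if 0 < β₀ + ∑ j ∈ P, β j * (if x j then (1 : ℝ) else 0) then (1 : ℝ) else 0)
          = (if ∀ j ∈ P, x j = true then 1 else 0)) ∧
    (((∀ i ∈ P, ∑ j ∈ P.erase i, β j ≤ -β₀) ∧ -β₀ < ∑ j ∈ P, β j) →
      (∀ j ∈ P, 0 < β j) ∧ ∀ U : Finset (Fin n), U ⊂ P → ∑ j ∈ U, β j ≤ -β₀) := by
  have key : ((∀ i ∈ P, ∑ j ∈ P.erase i, β j ≤ -β₀) ∧ -β₀ < ∑ j ∈ P, β j) →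
      (∀ j ∈ P, 0 < β j) ∧ ∀ U : Finset (Fin n), U ⊂ P → ∑ j ∈ U, β j ≤ -β₀ := by
    rintro ⟨h1, h2⟩
    have hpos : ∀ j ∈ P, 0 < β j := by
      intro j hj
      have h3 := Finset.add_sum_erase P β hj
      have h4 := h1 j hj
      linarith
    refine ⟨hpos, ?_⟩
    intro U hU
    obtain ⟨i, hi, hiU⟩ := Finset.exists_of_ssubset hU
    have hsub : U ⊆ P.erase i := by
      intro j hj
      refine Finset.mem_erase.mpr ⟨?_, hU.1 hj⟩
      rintro rfl
      exact hiU hj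
    refine le_trans (Finset.sum_le_sum_of_subset_of_nonneg hsub ?_) (h1 i hi)
    intro j hj _
    exact (hpos j (Finset.mem_of_mem_erase hj)).le
  have hsum : ∀ x : Fin n → Bool, ∑ j ∈ P, β j * (if x j then (1 : ℝ) else 0)
      = ∑ j ∈ P.filter (fun j => x j = true), β j := by
    intro x
    rw [Finset.sum_filter]
    exact Finset.sum_congr rfl (fun j _ => by split_ifs <;> simp)
  refine ⟨⟨?_, ?_⟩, key⟩
  · intro h x
    rw [hsum]
    by_cases hx : ∀ j ∈ P, x j = true
    · rw [Finset.filter_true_of_mem hx, if_pos hx, if_pos (by linarith [h.2])]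
    · have hss : P.filter (fun j => x j = true) ⊂ P := by
        rw [Finset.filter_ssubset]
        push Not at hx
        simpa using hx
      have := (key h).2 _ hss
      rw [if_neg hx, if_neg (by linarith)]
  · intro h
    constructor
    · intro i hi
      have h1 := h (fun j => decide (j ≠ i))
      rw [hsum] at h1
      have hne : ¬ ∀ j ∈ P, decide (j ≠ i) = true := fun hc => by simpa using hc i hi
      have hf : P.filter (fun j => decide (j ≠ i) = true) = P.erase i := by
        ext j
        simp [and_comm]
      rw [if_neg hne, hf] at h1
      by_contra hc
      rw [if_pos (by linarith)] at h1
      exact one_ne_zero h1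
    · have h1 := h (fun _ => true)
      rw [hsum, Finset.filter_true_of_mem (fun _ _ => rfl), if_pos (fun _ _ => rfl)] at h1
      by_contra hc
      rw [if_neg (by linarith)] at h1
      exact zero_ne_one h1
end

section
/- Let n ≥ 5 be a natural number and let c be a real number with 0 < c < 1. Set p = c·log(n)/(n−1) and a = 1 + p − p². Then p·(a^{n−1} − 1)/(a − 1) ≤ 2·n^c. -/
/-- For a natural number `n ≥ 5` and `0 < c < 1`, with `p = c·log(n)/(n−1)` and
`a = 1 + p − p²`, one has `p·(a^{n−1} − 1)/(a − 1) ≤ 2·n^c`. -/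
theorem geometric_ancestor_bound (n : ℕ) (hn : 5 ≤ n) (c : ℝ) (hc0 : 0 < c) (hc1 : c < 1)
    (p a : ℝ) (hp : p = c * Real.log n / ((n : ℝ) - 1)) (ha : a = 1 + p - p ^ 2) :
    p * ((a ^ (n - 1) - 1) / (a - 1)) ≤ 2 * (n : ℝ) ^ c := by
  have hn5 : (5 : ℝ) ≤ n := by exact_mod_cast hn
  have hn1 : (0 : ℝ) < (n : ℝ) - 1 := by linarith
  have hlog0 : 0 < Real.log n := Real.log_pos (by linarith)
  have hlog : Real.log n ≤ ((n : ℝ) - 1) / 2 := by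
    have h1 : Real.log ((n : ℝ) / 4) ≤ (n : ℝ) / 4 - 1 :=
      Real.log_le_sub_one_of_pos (by linarith)
    rw [Real.log_div (by linarith) (by norm_num)] at h1
    have h4 : Real.log 4 = 2 * Real.log 2 := by
      rw [show (4 : ℝ) = 2 ^ 2 by norm_num, Real.log_pow]; norm_num
    have := Real.log_two_lt_d9
    linarith
  have hp0 : 0 < p := by rw [hp]; positivity
  have hmul : p * ((n : ℝ) - 1) = c * Real.log n := by
    rw [hp]; field_simp
  have hp2 : p ≤ 1 / 2 := by
    rw [hp, div_le_iff₀ hn1]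
    nlinarith
  have hpow : a ^ (n - 1) ≤ (n : ℝ) ^ c := by
    have h1 : a ≤ Real.exp p := by
      have := Real.add_one_le_exp p
      nlinarith [sq_nonneg p]
    have ha0 : 0 ≤ a := by rw [ha]; nlinarith
    calc a ^ (n - 1) ≤ (Real.exp p) ^ (n - 1) := pow_le_pow_left₀ ha0 h1 _
      _ = (n : ℝ) ^ c := by
        rw [← Real.exp_nat_mul, Real.rpow_def_of_pos (by linarith),
          Nat.cast_sub (by omega), Nat.cast_one]
        congr 1
        linarith
  have heq : p * ((a ^ (n - 1) - 1) / (a - 1)) = (a ^ (n - 1) - 1) / (1 - p) := by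
    have h1 : a - 1 = p * (1 - p) := by rw [ha]; ring
    have h2 : (1 - p) ≠ 0 := by linarith
    rw [h1]; field_simp
  have hpos : 0 ≤ (n : ℝ) ^ c := by positivity
  rw [heq, div_le_iff₀ (by linarith)]
  nlinarith
end

section
/- Let n and k be natural numbers with 0 < k < n, fix a distinguished element e of an n-element set V, and let w be a nonnegative real weight function on the k-element subsets of V whose total sum over all k-element subsets equals 1. Assume that for every k-element subset S with e ∉ S and every i ∈ S, the swapped set (S \ {i}) ∪ {e} satisfies w((S \ {i}) ∪ {e}) ≤ w(S). Then Σ_{S : e ∉ S} w(S) ≥ 1 − k/n, where the sum is over all k-element subsets S of V not containing e. -/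
open Finset

/-- Swap inequality for weights on `k`-element subsets: if replacing any element
of a `k`-set avoiding `e` by `e` never increases the weight, then the total
weight of `k`-sets avoiding `e` is at least `1 − k/n`. -/
theorem avoid_weight_lower_bound {V : Type*} [Fintype V] [DecidableEq V]
    (n k : ℕ) (hk : 0 < k) (hkn : k < n) (hcard : Fintype.card V = n) (e : V)
    (w : Finset V → ℝ)
    (hw0 : ∀ S : Finset V, S.card = k → 0 ≤ w S)
    (hwsum : ∑ S ∈ (Finset.univ : Finset V).powersetCard k, w S = 1)
    (hswap : ∀ S : Finset V, S.card = k → e ∉ S →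
      ∀ i ∈ S, w (insert e (S.erase i)) ≤ w S) :
    1 - (k : ℝ) / n ≤
      ∑ S ∈ ((Finset.univ : Finset V).powersetCard k).filter (fun S => e ∉ S), w S := by
  set A := ((Finset.univ : Finset V).powersetCard k).filter (fun S => e ∉ S) with hA
  set B := ((Finset.univ : Finset V).powersetCard k).filter (fun S => ¬ e ∉ S) with hB
  have hAB : ∑ S ∈ A, w S + ∑ S ∈ B, w S = 1 := by
    rw [← hwsum]
    exact Finset.sum_filter_add_sum_filter_not _ _ _
  have memA : ∀ S, S ∈ A ↔ S.card = k ∧ e ∉ S := by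
    intro S
    simp [hA, Finset.mem_powersetCard]
  have memB : ∀ S, S ∈ B ↔ S.card = k ∧ e ∈ S := by
    intro S
    simp [hB, Finset.mem_powersetCard]
  have hdc : ∑ S ∈ B, ∑ _j ∈ Sᶜ, w S = ∑ S ∈ A, ∑ i ∈ S, w (insert e (S.erase i)) := by
    rw [Finset.sum_sigma', Finset.sum_sigma']
    refine Finset.sum_bij' (fun p _ => ⟨insert p.2 (p.1.erase e), p.2⟩)
      (fun p _ => ⟨insert e (p.1.erase p.2), p.2⟩) ?_ ?_ ?_ ?_ ?_
    · rintro ⟨S, j⟩ h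
      simp only [Finset.mem_sigma, memB, Finset.mem_compl] at h
      obtain ⟨⟨hc, he⟩, hj⟩ := h
      have hne : e ≠ j := fun h => hj (h ▸ he)
      simp only [Finset.mem_sigma, memA]
      refine ⟨⟨?_, by simp [hne]⟩, by simp⟩
      rw [Finset.card_insert_of_notMem (by simp [hj]), Finset.card_erase_of_mem he]
      omega
    · rintro ⟨S, j⟩ h
      simp only [Finset.mem_sigma, memA] at h
      obtain ⟨⟨hc, he⟩, hj⟩ := h
      have hne : j ≠ e := fun h => he (h ▸ hj)
      simp only [Finset.mem_sigma, memB, Finset.mem_compl]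
      refine ⟨⟨?_, by simp⟩, by simp [hne]⟩
      rw [Finset.card_insert_of_notMem (by simp [he]), Finset.card_erase_of_mem hj]
      omega
    · rintro ⟨S, j⟩ h
      simp only [Finset.mem_sigma, memB, Finset.mem_compl] at h
      obtain ⟨⟨hc, he⟩, hj⟩ := h
      simp [Finset.erase_insert, hj, Finset.insert_erase he]
    · rintro ⟨S, j⟩ h
      simp only [Finset.mem_sigma, memA] at h
      obtain ⟨⟨hc, he⟩, hj⟩ := h
      simp [Finset.erase_insert, he, Finset.insert_erase hj]
    · rintro ⟨S, j⟩ h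
      simp only [Finset.mem_sigma, memB, Finset.mem_compl] at h
      obtain ⟨⟨hc, he⟩, hj⟩ := h
      simp [Finset.erase_insert, hj, Finset.insert_erase he]
  have hL : ∑ S ∈ B, ∑ _j ∈ Sᶜ, w S = ((n : ℝ) - k) * ∑ S ∈ B, w S := by
    rw [Finset.mul_sum]
    refine Finset.sum_congr rfl fun S hS => ?_
    rw [Finset.sum_const, Finset.card_compl, hcard, ((memB S).1 hS).1, nsmul_eq_mul,
      Nat.cast_sub hkn.le]
  have hR : ∑ S ∈ A, ∑ i ∈ S, w (insert e (S.erase i)) ≤ (k : ℝ) * ∑ S ∈ A, w S := by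
    rw [Finset.mul_sum]
    refine Finset.sum_le_sum fun S hS => ?_
    obtain ⟨hc, he⟩ := (memA S).1 hS
    refine (Finset.sum_le_sum (hswap S hc he)).trans ?_
    rw [Finset.sum_const, hc, nsmul_eq_mul]
  have hn : (0 : ℝ) < n := by exact_mod_cast hk.trans hkn
  have hb : ∑ S ∈ B, w S = 1 - ∑ S ∈ A, w S := by linarith
  rw [← hdc, hL, hb] at hR
  rw [sub_le_iff_le_add, ← sub_le_iff_le_add', le_div_iff₀ hn]
  linarith
end
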